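/- arXiv:2605.03631 — 12 statements merged into one kernel-verified Lean document; each statement's English description precedes it below -/
import Mathlib

section
/- Let M be the dyadic matrix with signature m : V → 𝔽₂. If the weight of m is even then M * M = 0, and if the weight of m is odd then M * M = 1 (the identity matrix). Consequently, M is invertible if and only if the weight of m is odd, and in that case M⁻¹ = M. -/
/-- `V ℓ` is the 𝔽₂-vector space `Fin ℓ → ZMod 2` with bitwise-XOR addition. -/
abbrev V (ℓ : ℕ) := Fin ℓ → ZMod 2

/-!
In a vector space over `𝔽₂` subtraction is addition, so a dyadic matrix is a circulant matrix, and
its square is the circulant matrix of the convolution `m ∗ m`. In characteristic two the terms of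
`(m ∗ m) d` cancel in pairs under `c ↦ d - c`, which has no fixed points unless `d = 0`; at `d = 0`
every term is a square, and these add up to the square of the sum of `m`. For `𝔽₂`-valued `m` that
sum is the weight modulo 2.
-/

open Matrix

theorem eq_circulant_of_forall_apply_eq_add {G R : Type*} [AddCommGroup G] [Module (ZMod 2) G]
    {m : G → R} {M : Matrix G G R} (hM : ∀ a b, M a b = m (a + b)) : M = circulant m := by
  ext a b
  rw [hM, circulant_apply, ZModModule.sub_eq_add]

section Circulant

variable {G R : Type*} [AddCommGroup G] [Module (ZMod 2) G] [Fintype G] [DecidableEq G]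

theorem circulant_mulVec_self [CommSemiring R] [CharP R 2] (m : G → R) :
    circulant m *ᵥ m = Pi.single 0 ((∑ v, m v) ^ 2) := by
  ext d
  change ∑ c, m (d - c) * m c = _
  obtain rfl | hd := eq_or_ne d 0
  · simp only [zero_sub, ZModModule.neg_eq_self, Pi.single_eq_same, sq, CharTwo.sum_mul_self]
  · rw [Pi.single_eq_of_ne hd]
    refine Finset.sum_involution (fun c _ ↦ d - c) (fun c _ ↦ ?_) (fun c _ _ hc ↦ hd ?_)
      (fun _ _ ↦ Finset.mem_univ _) (fun c _ ↦ sub_sub_cancel d c)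
    · rw [sub_sub_cancel, mul_comm, CharTwo.add_self_eq_zero]
    · rw [sub_eq_iff_eq_add.mp hc, ZModModule.add_self]

theorem circulant_mul_self [CommSemiring R] [CharP R 2] (m : G → R) :
    circulant m * circulant m = scalar G ((∑ v, m v) ^ 2) := by
  rw [circulant_mul, circulant_mulVec_self, circulant_single]

theorem isUnit_circulant_iff [CommRing R] [CharP R 2] (m : G → R) :
    IsUnit (circulant m) ↔ IsUnit (∑ v, m v) := by
  rw [← isUnit_pow_iff two_ne_zero, sq, circulant_mul_self, scalar_apply, isUnit_diagonal,
    Pi.isUnit_iff, forall_const, isUnit_pow_iff two_ne_zero]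

theorem inv_circulant [CommRing R] [CharP R 2] {m : G → R} (hm : IsUnit (∑ v, m v)) :
    (circulant m)⁻¹ = Ring.inverse ((∑ v, m v) ^ 2) • circulant m := by
  refine inv_eq_left_inv ?_
  rw [smul_mul_assoc, circulant_mul_self, scalar_apply, ← smul_one_eq_diagonal, smul_smul,
    Ring.inverse_mul_cancel _ (hm.pow 2), one_smul]

end Circulant

theorem sum_zmod_two_eq_card_ne_zero {ι : Type*} (s : Finset ι) (f : ι → ZMod 2) :
    ∑ i ∈ s, f i = ((s.filter fun i ↦ f i ≠ 0).card : ZMod 2) := by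
  rw [Finset.natCast_card_filter]
  refine Finset.sum_congr rfl fun i _ ↦ ?_
  have zmod_two_eq_ite : ∀ x : ZMod 2, x = if x ≠ 0 then 1 else 0 := by decide
  exact zmod_two_eq_ite (f i)

theorem dyadic_sq_general {G R : Type*} [AddCommGroup G] [Module (ZMod 2) G] [Fintype G]
    [DecidableEq G] [CommRing R] [CharP R 2] (m : G → R) (M : Matrix G G R)
    (hM : ∀ a b, M a b = m (a + b)) :
    M * M = scalar G ((∑ v, m v) ^ 2) ∧
    (IsUnit M ↔ IsUnit (∑ v, m v)) ∧
    (IsUnit (∑ v, m v) → M⁻¹ = Ring.inverse ((∑ v, m v) ^ 2) • M) := by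
  obtain rfl := eq_circulant_of_forall_apply_eq_add hM
  exact ⟨circulant_mul_self m, isUnit_circulant_iff m, inv_circulant⟩

/-- For a dyadic matrix `M` with signature `m`: `M * M = 0` if the weight of `m` is even,
`M * M = 1` if it is odd; `M` is invertible iff the weight of `m` is odd, in which case
`M⁻¹ = M`. -/
theorem dyadic_sq (ℓ : ℕ) (m : V ℓ → ZMod 2)
    (M : Matrix (V ℓ) (V ℓ) (ZMod 2))
    (hM : ∀ a b, M a b = m (a + b)) :
    (Even (Finset.univ.filter fun v => m v ≠ 0).card → M * M = 0) ∧
    (Odd (Finset.univ.filter fun v => m v ≠ 0).card → M * M = 1) ∧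
    (IsUnit M ↔ Odd (Finset.univ.filter fun v => m v ≠ 0).card) ∧
    (Odd (Finset.univ.filter fun v => m v ≠ 0).card → M⁻¹ = M) := by
  simp only [← ZMod.natCast_eq_zero_iff_even, ← ZMod.natCast_eq_one_iff_odd,
    ← sum_zmod_two_eq_card_ne_zero]
  obtain ⟨hsq, hunit, hinv⟩ := dyadic_sq_general m M hM
  refine ⟨fun hm ↦ ?_, fun hm ↦ ?_, hunit.trans isUnit_iff_eq_one, fun hm ↦ ?_⟩
  · rw [hsq, hm, zero_pow two_ne_zero, map_zero]
  · rw [hsq, hm, one_pow, map_one]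
  · rw [hinv (isUnit_iff_eq_one.mpr hm), hm, one_pow, Ring.inverse_one, one_smul]
end

section
/- Let H be a dyadic matrix over 𝔽₂ and let s ∈ V. Then for every vector c : V → 𝔽₂, one has H.mulVec c = 0 if and only if H.mulVec (fun x => c (x + s)) = 0. In other words, the coordinate permutation x ↦ x + s (the permutation realized by the DPM D^(s)) is an automorphism of the code ker H, so the automorphism group of any dyadic code contains all 2^ℓ dyadic permutations. -/
section

open scoped Matrix

variable {R : Type*} [NonUnitalNonAssocSemiring R]

lemma mulVec_eq_zero_iff_mulVec_comp_perm_eq_zero {I J : Type*} [Fintype J] {M : Matrix I J R}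
    {σ : Equiv.Perm I} {τ : Equiv.Perm J} (hM : M.submatrix σ τ.symm = M) (c : J → R) :
    M *ᵥ c = 0 ↔ M *ᵥ (c ∘ τ) = 0 := by
  have mulVec_eq : M *ᵥ c = (M *ᵥ (c ∘ τ)) ∘ σ := by
    simpa only [hM, Equiv.symm_symm] using M.submatrix_mulVec_equiv c σ τ.symm
  rw [mulVec_eq]
  exact σ.surjective.injective_comp_right.eq_iff' (Pi.zero_comp σ)

variable {G : Type*} [AddGroup G]

/-- For `G = V ℓ` this is the identity `D^(s) H D^(s) = H`. -/
lemma submatrix_addRight_addLeft_symm_eq_self {α : Type*} {m : G → α} {H : Matrix G G α}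
    (hH : ∀ a b, H a b = m (a + b)) (s : G) :
    H.submatrix (Equiv.addRight s) (Equiv.addLeft s).symm = H := by
  ext a b
  calc
    H (a + s) (-s + b) = m (a + s + (-s + b)) := hH _ _
    _ = m (a + b) := by rw [add_assoc, add_neg_cancel_left]
    _ = H a b := (hH a b).symm

theorem dyadic_code_automorphism_general [Fintype G] {m : G → R} {H : Matrix G G R}
    (hH : ∀ a b, H a b = m (a + b)) (s : G) (c : G → R) :
    H *ᵥ c = 0 ↔ H *ᵥ (fun x => c (s + x)) = 0 :=
  mulVec_eq_zero_iff_mulVec_comp_perm_eq_zero (submatrix_addRight_addLeft_symm_eq_self hH s) c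

end

/-- For a dyadic matrix `H`, the coordinate permutation `x ↦ x + s` (realized by the
DPM `D^(s)`) is an automorphism of the code `ker H`. -/
theorem dyadic_code_automorphism (ℓ : ℕ) (m : V ℓ → ZMod 2)
    (H : Matrix (V ℓ) (V ℓ) (ZMod 2))
    (hH : ∀ a b, H a b = m (a + b))
    (s : V ℓ) (c : V ℓ → ZMod 2) :
    H.mulVec c = 0 ↔ H.mulVec (fun x => c (x + s)) = 0 := by
  simpa only [add_comm s] using dyadic_code_automorphism_general hH s c
end

section
/- Let G : Matrix (Fin k × V) (Fin n × V) 𝔽₂ be quasi-dyadic, i.e., for all i : Fin k and j : Fin n there is a signature m_{ij} : V → 𝔽₂ with G (i, a) (j, b) = m_{ij} (a + b) for all a, b ∈ V. Fix s ∈ V and let π_s : Fin n × V → Fin n × V be the permutation (j, b) ↦ (j, b + s). Then a vector x : (Fin n × V) → 𝔽₂ lies in the 𝔽₂-linear span of the rows of G if and only if x ∘ π_s lies in the 𝔽₂-linear span of the rows of G. Hence the automorphism group of the code generated by G contains the 2^ℓ permutations π_s. -/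
/-!
Translating every block of row `(i, a)` by `s` gives row `(i, a + s)`. The translation therefore
permutes the rows, hence preserves their span, and being invertible it also reflects membership.
-/

open Submodule (span)

section RowSpan

variable {R l m n o : Type*} [Semiring R]

theorem map_funLeft_span_range_row (M : Matrix m n R) (f : o → n) :
    (span R (Set.range M.row)).map (LinearMap.funLeft R R f) =
      span R (Set.range (M.submatrix id f).row) := by
  rw [Submodule.map_span, ← Set.range_comp]
  rfl

theorem span_range_row_submatrix_left (M : Matrix m n R) {e : l → m}
    (he : Function.Surjective e) :
    span R (Set.range (M.submatrix e id).row) = span R (Set.range M.row) :=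
  congrArg (span R) (he.range_comp M.row)

theorem mem_span_range_row_iff_comp_mem {M : Matrix m n R} {e : m → m} {f : n → n}
    (he : Function.Surjective e) (hf : Function.Surjective f)
    (hM : M.submatrix e id = M.submatrix id f) (x : n → R) :
    x ∈ span R (Set.range M.row) ↔ x ∘ f ∈ span R (Set.range M.row) := by
  have map_eq : (span R (Set.range M.row)).map (LinearMap.funLeft R R f) =
      span R (Set.range M.row) := by
    rw [map_funLeft_span_range_row, ← hM, span_range_row_submatrix_left M he]
  calc x ∈ span R (Set.range M.row)
    _ ↔ LinearMap.funLeft R R f x ∈ (span R (Set.range M.row)).map (LinearMap.funLeft R R f) :=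
      ((LinearMap.funLeft_injective_of_surjective R R f hf).mem_set_image).symm
    _ ↔ x ∘ f ∈ span R (Set.range M.row) := by rw [map_eq]; rfl

end RowSpan

section QuasiDyadic

variable {R A ι κ : Type*}

/-- A square matrix indexed by an additively written type `A` is dyadic if its entry at `(a, b)`
depends only on `a + b`, through a signature `m`. Dyadic matrices in the usual sense are the case
`A = V ℓ`. -/
def IsDyadic [Add A] (M : Matrix A A R) : Prop :=
  ∃ m : A → R, ∀ a b, M a b = m (a + b)

/-- A block matrix is quasi-dyadic if all its blocks are dyadic. The first component of an index
selects the block, the second the position inside it. -/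
def IsQuasiDyadic [Add A] (M : Matrix (ι × A) (κ × A) R) : Prop :=
  ∀ i j, IsDyadic (M.submatrix (Prod.mk i) (Prod.mk j))

theorem IsDyadic.apply_add_left [AddSemigroup A] {M : Matrix A A R} (hM : IsDyadic M)
    (a s b : A) : M (a + s) b = M a (s + b) := by
  obtain ⟨m, hm⟩ := hM
  rw [hm, hm, add_assoc]

theorem IsQuasiDyadic.submatrix_translate [AddSemigroup A] {M : Matrix (ι × A) (κ × A) R}
    (hM : IsQuasiDyadic M) (s : A) :
    M.submatrix (Prod.map id (· + s)) id = M.submatrix id (Prod.map id (s + ·)) := by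
  ext ⟨i, a⟩ ⟨j, b⟩
  exact (hM i j).apply_add_left a s b

theorem quasiDyadic_rowSpan_automorphism_general [Semiring R] [AddGroup A]
    {G : Matrix (ι × A) (κ × A) R} (hG : IsQuasiDyadic G) (s : A) (x : κ × A → R) :
    x ∈ span R (Set.range G.row) ↔
      (fun p : κ × A => x (p.1, s + p.2)) ∈ span R (Set.range G.row) :=
  mem_span_range_row_iff_comp_mem
    (Function.surjective_id.prodMap (add_right_surjective s))
    (Function.surjective_id.prodMap (add_left_surjective s))
    (hG.submatrix_translate s) x

end QuasiDyadic

/-- For a quasi-dyadic generator matrix `G`, a vector lies in the row span of `G`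
iff its image under the coordinate permutation `(j, b) ↦ (j, b + s)` does; hence the
automorphism group of the generated code contains all `2^ℓ` such permutations. -/
theorem quasiDyadic_rowSpan_automorphism (ℓ k n : ℕ)
    (G : Matrix (Fin k × V ℓ) (Fin n × V ℓ) (ZMod 2))
    (hG : ∀ (i : Fin k) (j : Fin n), ∃ mij : V ℓ → ZMod 2,
      ∀ a b, G (i, a) (j, b) = mij (a + b))
    (s : V ℓ) (x : (Fin n × V ℓ) → ZMod 2) :
    x ∈ Submodule.span (ZMod 2) (Set.range fun i => G i) ↔
      (fun p : Fin n × V ℓ => x (p.1, p.2 + s)) ∈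
        Submodule.span (ZMod 2) (Set.range fun i => G i) := by
  simp only [add_comm _ s]
  exact quasiDyadic_rowSpan_automorphism_general hG s x
end

section
/- Let G : Matrix (Fin k × V) (Fin n × V) 𝔽₂ be quasi-dyadic, i.e., for all i : Fin k and j : Fin n there is a signature m_{ij} : V → 𝔽₂ with G (i, a) (j, b) = m_{ij} (a + b) for all a, b ∈ V. Then for every s ∈ V, G * Matrix.blockDiagonal (fun _ : Fin n => D^(s)) = Matrix.blockDiagonal (fun _ : Fin k => D^(s)) * G; that is, right multiplication of a quasi-dyadic matrix by the block-diagonal matrix with the DPM D^(s) on every diagonal block equals the corresponding left multiplication. -/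
/-- The dyadic permutation matrix (DPM) with position `s`. -/
def DPM {ℓ : ℕ} (s : V ℓ) : Matrix (V ℓ) (V ℓ) (ZMod 2) :=
  Matrix.of fun a b => if a + b = s then 1 else 0

section BlockMatrix

open Matrix

variable {ι κ o n R : Type*}

theorem matrixComp_mul [Fintype κ] [Fintype n] [NonUnitalNonAssocSemiring R]
    (M : Matrix ι κ (Matrix n n R)) (N : Matrix κ o (Matrix n n R)) :
    comp ι o n n R (M * N) = comp ι κ n n R M * comp κ o n n R N := by
  ext ⟨i, a⟩ ⟨j, b⟩
  simp only [comp_apply, mul_apply, Matrix.sum_apply, Fintype.sum_prod_type]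

theorem matrixComp_diagonal [DecidableEq ι] [Zero R] (D : ι → Matrix n n R) :
    comp ι ι n n R (diagonal D) = (blockDiagonal D).submatrix Prod.swap Prod.swap := by
  ext ⟨i, a⟩ ⟨j, b⟩
  simp only [comp_apply, diagonal_apply, submatrix_apply, Prod.swap_prod_mk, blockDiagonal_apply]
  split_ifs <;> rfl

theorem mul_blockDiagonal_eq_blockDiagonal_mul [Fintype ι] [DecidableEq ι] [Fintype κ]
    [DecidableEq κ] [Fintype n] [NonUnitalNonAssocSemiring R] {G : Matrix (ι × n) (κ × n) R}
    {D : ι → Matrix n n R} {E : κ → Matrix n n R}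
    (hG : ∀ i j, (comp ι κ n n R).symm G i j * E j = D i * (comp ι κ n n R).symm G i j) :
    G * (blockDiagonal E).submatrix Prod.swap Prod.swap =
      (blockDiagonal D).submatrix Prod.swap Prod.swap * G := by
  obtain ⟨B, rfl⟩ := (comp ι κ n n R).surjective G
  simp only [Equiv.symm_apply_apply] at hG
  rw [← matrixComp_diagonal, ← matrixComp_diagonal, ← matrixComp_mul, ← matrixComp_mul]
  congr 1
  ext1 i j
  rw [mul_diagonal, diagonal_mul, hG]

/-- A block matrix is block-circulant if each of its blocks is circulant with respect to the
group `A` of inner indices. For `A = V ℓ` these are the quasi-dyadic matrices. As in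
`Matrix.comp`, the outer index comes first. -/
def IsBlockCirculant {A : Type*} [Sub A] (G : Matrix (ι × A) (κ × A) R) : Prop :=
  ∀ i j, ∃ v : A → R, (comp ι κ A A R).symm G i j = circulant v

theorem quasiDyadic_blockDiagonal_comm_general {A : Type*} [Fintype ι] [DecidableEq ι] [Fintype κ]
    [DecidableEq κ] [Fintype A] [AddCommGroup A] [NonUnitalNonAssocCommSemiring R]
    {G : Matrix (ι × A) (κ × A) R} (hG : IsBlockCirculant G) (d : A → R) :
    G * (blockDiagonal fun _ : κ => circulant d).submatrix Prod.swap Prod.swap =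
      (blockDiagonal fun _ : ι => circulant d).submatrix Prod.swap Prod.swap * G := by
  refine mul_blockDiagonal_eq_blockDiagonal_mul fun i j => ?_
  obtain ⟨v, hv⟩ := hG i j
  rw [hv, circulant_mul_comm]

theorem isBlockCirculant_iff_quasiDyadic {A : Type*} [AddCommGroup A] [Module (ZMod 2) A]
    {G : Matrix (ι × A) (κ × A) R} :
    IsBlockCirculant G ↔ ∀ i j, ∃ m : A → R, ∀ a b, G (i, a) (j, b) = m (a + b) := by
  simp only [IsBlockCirculant, ← Matrix.ext_iff, comp_symm_apply, circulant_apply,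
    ZModModule.sub_eq_add]

end BlockMatrix

theorem DPM_eq_circulant {ℓ : ℕ} (s : V ℓ) : DPM s = Matrix.circulant (Pi.single s 1) := by
  ext a b
  rw [DPM, Matrix.of_apply, Matrix.circulant_apply, Pi.single_apply, ZModModule.sub_eq_add]

/-- Right multiplication of a quasi-dyadic matrix by the block-diagonal matrix with the
DPM `D^(s)` on every diagonal block equals the corresponding left multiplication. -/
theorem quasiDyadic_blockDiagonal_comm (ℓ k n : ℕ)
    (G : Matrix (Fin k × V ℓ) (Fin n × V ℓ) (ZMod 2))
    (hG : ∀ (i : Fin k) (j : Fin n), ∃ mij : V ℓ → ZMod 2,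
      ∀ a b, G (i, a) (j, b) = mij (a + b))
    (s : V ℓ) :
    G * (Matrix.blockDiagonal fun _ : Fin n => DPM s).submatrix Prod.swap Prod.swap =
      ((Matrix.blockDiagonal fun _ : Fin k => DPM s).submatrix Prod.swap Prod.swap) * G := by
  rw [DPM_eq_circulant]
  exact quasiDyadic_blockDiagonal_comm_general (isBlockCirculant_iff_quasiDyadic.mpr hG) _
end

section
/- Let H : Matrix (Fin r) (Fin n) 𝔽₂ satisfy the orthogonality condition H * Hᵀ = 0. If some column of H has at least two nonzero entries (in particular, if H has column weight v > 1), then the cycles condition fails: there exist row indices i ≠ i' and column indices j ≠ j' such that H i j, H i j', H i' j, and H i' j' are all nonzero, i.e., the Tanner graph of H contains a cycle of length 4. Hence no binary parity-check matrix with column weight greater than 1 can satisfy both the orthogonality and the cycles conditions. -/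
open Matrix

theorem exists_ne_ne_zero_of_sum_eq_zero {ι M : Type*} [AddCommMonoid M] {s : Finset ι}
    {f : ι → M} {j : ι} (hsum : ∑ k ∈ s, f k = 0) (hj : j ∈ s) (hfj : f j ≠ 0) :
    ∃ j' ∈ s, j' ≠ j ∧ f j' ≠ 0 := by
  contrapose! hfj
  exact Finset.eq_zero_of_sum_eq_zero hsum hfj j hj

section NoZeroDivisors

variable {m n R : Type*} [Fintype n] [NonUnitalNonAssocSemiring R] [NoZeroDivisors R]

theorem exists_ne_ne_zero_of_dotProduct_eq_zero {v w : n → R} {j : n}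
    (horth : v ⬝ᵥ w = 0) (hv : v j ≠ 0) (hw : w j ≠ 0) :
    ∃ j' ≠ j, v j' ≠ 0 ∧ w j' ≠ 0 := by
  obtain ⟨j', -, hne, hmul⟩ :=
    exists_ne_ne_zero_of_sum_eq_zero horth (Finset.mem_univ j) (mul_ne_zero hv hw)
  exact ⟨j', hne, mul_ne_zero_iff.mp hmul⟩

theorem orthogonality_and_colWeight_implies_4cycle_general (H : Matrix m n R)
    (horth : (H * Hᵀ).IsDiag)
    (hcol : ∃ j : n, ∃ i i' : m, i ≠ i' ∧ H i j ≠ 0 ∧ H i' j ≠ 0) :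
    ∃ (i i' : m) (j j' : n), i ≠ i' ∧ j ≠ j' ∧
      H i j ≠ 0 ∧ H i j' ≠ 0 ∧ H i' j ≠ 0 ∧ H i' j' ≠ 0 := by
  obtain ⟨j, i, i', hrows, hij, hi'j⟩ := hcol
  have hdot : H i ⬝ᵥ H i' = 0 := horth hrows
  obtain ⟨j', hcols, hij', hi'j'⟩ := exists_ne_ne_zero_of_dotProduct_eq_zero hdot hij hi'j
  exact ⟨i, i', j, j', hrows, hcols.symm, hij, hij', hi'j, hi'j'⟩

end NoZeroDivisors

/-- If `H * Hᵀ = 0` and some column of `H` has at least two nonzero entries, then the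
Tanner graph of `H` contains a length-4 cycle: two distinct rows share two or more
common nonzero positions. -/
theorem orthogonality_and_colWeight_implies_4cycle (r n : ℕ)
    (H : Matrix (Fin r) (Fin n) (ZMod 2))
    (horth : H * Hᵀ = 0)
    (hcol : ∃ j : Fin n, ∃ i i' : Fin r, i ≠ i' ∧ H i j ≠ 0 ∧ H i' j ≠ 0) :
    ∃ (i i' : Fin r) (j j' : Fin n), i ≠ i' ∧ j ≠ j' ∧
      H i j ≠ 0 ∧ H i j' ≠ 0 ∧ H i' j ≠ 0 ∧ H i' j' ≠ 0 :=
  orthogonality_and_colWeight_implies_4cycle_general H (horth ▸ isDiag_zero) hcol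
end

section
/- Let w, u ≥ 1 and let H : Matrix (Fin w × V) (Fin u × V) 𝔽₂ be a w × u array of DPMs, i.e., there exist positions ρ : Fin w → Fin u → V such that H (i, a) (j, b) = 1 if a + b = ρ i j and H (i, a) (j, b) = 0 otherwise. Then the rank of H over 𝔽₂ satisfies Matrix.rank H ≤ w · 2^ℓ − (w − 1). -/
/-!
Adding up the rows of `H` inside each of its `w` blocks is left multiplication by a matrix of full
row rank `w`, and every row of the product is the all-ones vector, so the product has rank at
most one. Sylvester's rank inequality then bounds the rank of `H`.
-/

theorem rank_add_rank_le_rank_mul_add_card {l m n K : Type*} [Fintype m] [Fintype n]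
    [Field K] (A : Matrix l m K) (B : Matrix m n K) :
    A.rank + B.rank ≤ (A * B).rank + Fintype.card m := by
  let f := A.mulVecLin.domRestrict (LinearMap.range B.mulVecLin)
  have range_f : LinearMap.range f = LinearMap.range (A * B).mulVecLin := by
    rw [LinearMap.range_domRestrict, Matrix.mulVecLin_mul, LinearMap.range_comp]
  have ker_f_le : Module.finrank K (LinearMap.ker f) ≤
      Module.finrank K (LinearMap.ker A.mulVecLin) := by
    rw [LinearMap.ker_domRestrict, ← Submodule.finrank_map_subtype_eq]
    exact Submodule.finrank_mono (Submodule.map_comap_le _ _)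
  have rank_B : (A * B).rank + Module.finrank K (LinearMap.ker f) = B.rank := by
    rw [Matrix.rank, ← range_f, f.finrank_range_add_finrank_ker, Matrix.rank]
  have rank_A : A.rank + Module.finrank K (LinearMap.ker A.mulVecLin) = Fintype.card m := by
    rw [Matrix.rank, A.mulVecLin.finrank_range_add_finrank_ker,
      Module.finrank_fintype_fun_eq_card]
  lia

section BlockSum

variable {ι β R : Type*} [DecidableEq ι]

variable (ι β R) in
/-- The matrix whose left multiplication adds up the rows in each block `{i} × β` of a matrix with
rows indexed by `ι × β`. -/
def blockSumMatrix [Zero R] [One R] : Matrix ι (ι × β) R :=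
  (1 : Matrix ι ι R).submatrix id Prod.fst

variable [Fintype ι] [Fintype β]

theorem blockSumMatrix_mul_apply {κ : Type*} [NonAssocSemiring R] (H : Matrix (ι × β) κ R)
    (i : ι) (k : κ) : (blockSumMatrix ι β R * H) i k = ∑ a, H (i, a) k := by
  simp [blockSumMatrix, Matrix.mul_apply, Fintype.sum_prod_type_right, Matrix.one_apply]

theorem card_le_rank_blockSumMatrix [CommSemiring R] [StrongRankCondition R] [Nonempty β] :
    Fintype.card ι ≤ (blockSumMatrix ι β R).rank := by
  obtain ⟨b⟩ := ‹Nonempty β›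
  calc Fintype.card ι = (1 : Matrix ι ι R).rank := Matrix.rank_one.symm
    _ = ((blockSumMatrix ι β R).submatrix id (·, b)).rank := rfl
    _ ≤ (blockSumMatrix ι β R).rank := Matrix.rank_submatrix_le _ _ _

end BlockSum

theorem rank_add_card_le_of_blockSum_eq {ι β κ K : Type*} [Fintype ι] [Fintype β] [Nonempty β]
    [Fintype κ] [Field K] {H : Matrix (ι × β) κ K} {c : κ → K}
    (hH : ∀ i k, ∑ a, H (i, a) k = c k) :
    H.rank + Fintype.card ι ≤ Fintype.card ι * Fintype.card β + 1 := by
  classical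
  have mul_eq : blockSumMatrix ι β K * H = Matrix.vecMulVec 1 c := by
    ext i k
    rw [blockSumMatrix_mul_apply, hH, Matrix.vecMulVec_apply, Pi.one_apply, one_mul]
  have rank_mul : (blockSumMatrix ι β K * H).rank ≤ 1 := mul_eq ▸ Matrix.rank_vecMulVec_le 1 c
  have sylvester := rank_add_rank_le_rank_mul_add_card (blockSumMatrix ι β K) H
  have card_le := card_le_rank_blockSumMatrix (ι := ι) (β := β) (R := K)
  rw [Fintype.card_prod] at sylvester
  lia

theorem sum_permMatrix_apply {β R : Type*} [Fintype β] [DecidableEq β] [AddCommMonoidWithOne R]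
    (σ : Equiv.Perm β) (b : β) : ∑ a, σ.permMatrix R a b = 1 := by
  simp [PEquiv.toMatrix_apply, ← Equiv.eq_symm_apply]

theorem dpmArray_rank_le_general {ι κ β K : Type*} [Fintype ι] [Fintype κ] [Fintype β]
    [DecidableEq β] [Nonempty β] [Field K] (σ : ι → κ → Equiv.Perm β) :
    (Matrix.comp ι κ β β K (Matrix.of fun i j => (σ i j).permMatrix K)).rank + Fintype.card ι ≤
      Fintype.card ι * Fintype.card β + 1 :=
  rank_add_card_le_of_blockSum_eq (c := 1) fun i k => sum_permMatrix_apply (σ i k.1) k.2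

/-- A `w × u` array of dyadic permutation matrices has rank at most `w·2^ℓ − (w − 1)`. -/
theorem dpmArray_rank_le (ℓ w u : ℕ) (hw : 1 ≤ w) (hu : 1 ≤ u)
    (ρ : Fin w → Fin u → V ℓ)
    (H : Matrix (Fin w × V ℓ) (Fin u × V ℓ) (ZMod 2))
    (hH : ∀ (i : Fin w) (j : Fin u) (a b : V ℓ),
      H (i, a) (j, b) = if a + b = ρ i j then 1 else 0) :
    H.rank ≤ w * 2 ^ ℓ - (w - 1) := by
  have H_eq : H = Matrix.comp _ _ _ _ _
      (Matrix.of fun i j => Equiv.Perm.permMatrix (ZMod 2) (Equiv.subLeft (ρ i j))) := by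
    ext ⟨i, a⟩ ⟨j, b⟩
    simp [hH, PEquiv.toMatrix_apply, eq_sub_iff_add_eq', eq_comm]
  have rank_le := dpmArray_rank_le_general (K := ZMod 2) fun i j => Equiv.subLeft (ρ i j)
  rw [← H_eq] at rank_le
  simp only [Fintype.card_fun, ZMod.card, Fintype.card_fin] at rank_le
  lia
end

section
/- (Construction A with w = 4.) Let t ≥ 1 and u = 2t. Fix an anchor position q ∈ V and positions z : Fin t → V, and define block rows B : Fin 4 → Fin u → Matrix V V 𝔽₂ by: B 0 (2j) = D^(q) and B 0 (2j+1) = D^(z j) for 0 ≤ j ≤ t−1; B 1 c = B 0 ((c + u − 1) mod u) (block-wise cyclic shift of B 0 to the right by one position); B 2 (2j) = D^(q) and B 2 (2j+1) = D^(z (t−1−j)) for 0 ≤ j ≤ t−1; B 3 c = B 2 ((c + u − 1) mod u). Let H : Matrix (Fin 4 × V) (Fin u × V) 𝔽₂ be given by H (i, a) (c, b) = (B i c) a b. Then H * Hᵀ = 0; in particular, for every 1 ≤ w ≤ 4 the submatrix consisting of the first w block rows also satisfies the orthogonality condition. -/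
/-!
DPMs are symmetric with `D^(s) * D^(r) = D^(s + r)`, so block rows with positions `x` and `y` are
orthogonal iff `∑ c, D^(x c + y c) = 0`. Index the columns by `ℤ/2t`: if row `0` has positions `p`,
then reversing the `z j` is the reflection `c ↦ -c`, and the four rows are `p c`, `p (c - 1)`,
`p (-c)` and `p (1 - c)`. Any two of them differ by an involution of the columns or by a shift by
one. For an involution the terms cancel in pairs, and the fixed points, even in number, each
contribute `D^(0)`. For a shift by one, `p c` or `p (c - 1)` is always the anchor `q`, so
`D^(p c + p (c - 1)) = D^(q + p c) + D^(q + p (c - 1)) + D^(0)`, and the first two terms have the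
same sum over `c`.
-/

open Matrix

section CharTwo

variable {ι M : Type*} [Fintype ι] [AddCommGroup M] [Module (ZMod 2) M]

theorem sum_const_eq_zero_of_even_card (hι : Even (Fintype.card ι)) (m : M) :
    ∑ _c : ι, m = 0 := by
  obtain ⟨n, hn⟩ := hι
  rw [Finset.sum_const, Finset.card_univ, hn, add_nsmul, ZModModule.add_self]

theorem sum_eq_zero_of_involutive (hι : Even (Fintype.card ι)) {σ : ι → ι}
    (hσ : Function.Involutive σ) {F : ι → M} {m : M} (hF : ∀ c, F (σ c) = F c)
    (hfix : ∀ c, σ c = c → F c = m) : ∑ c, F c = 0 := by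
  have hshift : ∑ c, (F c + m) = 0 := by
    refine Finset.sum_involution (fun c _ => σ c) (fun c _ => ?_) (fun c _ hne hc => hne ?_)
      (fun _ _ => Finset.mem_univ _) (fun c _ => hσ c)
    · rw [hF, ZModModule.add_self]
    · rw [hfix c hc, ZModModule.add_self]
  rwa [Finset.sum_add_distrib, sum_const_eq_zero_of_even_card hι, add_zero] at hshift

end CharTwo

section BlockRows

variable {ι κ m n R : Type*} [Fintype ι] [Fintype n]

/-- Orthogonality of two block rows: the corresponding block of `H * Hᵀ` vanishes. -/
def BlockRowsOrthogonal [NonUnitalNonAssocSemiring R] (X Y : ι → Matrix m n R) : Prop :=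
  ∑ c, X c * (Y c)ᵀ = 0

theorem BlockRowsOrthogonal.symm [NonUnitalCommSemiring R] {X Y : ι → Matrix m n R}
    (h : BlockRowsOrthogonal X Y) : BlockRowsOrthogonal Y X := by
  have htranspose := congrArg transpose h
  simpa only [BlockRowsOrthogonal, transpose_sum, transpose_mul, transpose_transpose,
    transpose_zero] using htranspose

theorem mul_transpose_eq_zero_of_blockRowsOrthogonal [NonUnitalNonAssocSemiring R]
    {X : κ → ι → Matrix m n R} {H : Matrix (κ × m) (ι × n) R}
    (hH : ∀ i a c b, H (i, a) (c, b) = X i c a b)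
    (hX : ∀ i k, BlockRowsOrthogonal (X i) (X k)) : H * Hᵀ = 0 := by
  ext ⟨i, a⟩ ⟨k, b⟩
  have hentry := congrFun₂ (hX i k) a b
  simpa only [mul_apply, transpose_apply, hH, Fintype.sum_prod_type, Matrix.sum_apply,
    Matrix.zero_apply] using hentry

end BlockRows

section DPM

variable {ℓ : ℕ}

theorem DPM_transpose (s : V ℓ) : (DPM s)ᵀ = DPM s := by
  ext a b
  simp only [DPM, transpose_apply, of_apply, add_comm b a]

theorem DPM_mul_DPM (s r : V ℓ) : DPM s * DPM r = DPM (s + r) := by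
  have add_eq_iff (x y w : V ℓ) : x + y = w ↔ y = x + w := by
    rw [← eq_sub_iff_add_eq', ZModModule.sub_eq_add, add_comm w]
  ext a b
  have hposition : a + s + b = r ↔ a + b = s + r := by
    rw [add_right_comm, add_comm, add_eq_iff]
  simp only [mul_apply, DPM, of_apply, add_eq_iff a _ s, ite_mul, one_mul, zero_mul,
    Finset.sum_ite_eq', Finset.mem_univ, if_true, hposition]

variable {ι : Type*} [Fintype ι]

theorem blockRowsOrthogonal_DPM_iff {x y : ι → V ℓ} :
    BlockRowsOrthogonal (fun c => DPM (x c)) (fun c => DPM (y c)) ↔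
      ∑ c, DPM (x c + y c) = 0 := by
  simp only [BlockRowsOrthogonal, DPM_transpose, DPM_mul_DPM]

theorem blockRowsOrthogonal_DPM_comp_involutive (hι : Even (Fintype.card ι)) (x : ι → V ℓ)
    {σ : ι → ι} (hσ : Function.Involutive σ) :
    BlockRowsOrthogonal (fun c => DPM (x c)) (fun c => DPM (x (σ c))) := by
  refine blockRowsOrthogonal_DPM_iff.2 <|
    sum_eq_zero_of_involutive (m := DPM 0) hι hσ (fun c => ?_) (fun c hc => ?_)
  · rw [hσ c, add_comm]
  · rw [hc, ZModModule.add_self]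

theorem blockRowsOrthogonal_DPM_comp_perm_of_anchor (hι : Even (Fintype.card ι))
    {x : ι → V ℓ} {q : V ℓ} (σ : Equiv.Perm ι) (hq : ∀ c, x c = q ∨ x (σ c) = q) :
    BlockRowsOrthogonal (fun c => DPM (x c)) (fun c => DPM (x (σ c))) := by
  have hsplit (c : ι) :
      DPM (x c + x (σ c)) = DPM (q + x c) + DPM (q + x (σ c)) + DPM 0 := by
    obtain hc | hc := hq c
    · rw [hc, ZModModule.add_self, add_right_comm, ZModModule.add_self, zero_add]
    · rw [hc, ZModModule.add_self, add_assoc, ZModModule.add_self, add_zero, add_comm q]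
  rw [blockRowsOrthogonal_DPM_iff]
  simp only [hsplit, Finset.sum_add_distrib]
  rw [Equiv.sum_comp σ fun c => DPM (q + x c), ZModModule.add_self, zero_add,
    sum_const_eq_zero_of_even_card hι]

end DPM

section DihedralRows

variable {G α : Type*} [AddCommGroup G]

/-- The four rows obtained from `p` by the shift by `g`, the reflection `c ↦ -c`, and the shift of
the reflected row: the positions in Construction A, where `G = ℤ/2t` and `g = 1`. -/
def dihedralRows (p : G → α) (g : G) : Fin 4 → G → α :=
  ![p, fun c => p (c - g), fun c => p (-c), fun c => p (-(c - g))]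

theorem blockRowsOrthogonal_dihedralRows [Fintype G] (hG : Even (Fintype.card G)) {ℓ : ℕ}
    {p : G → V ℓ} {q : V ℓ} {g : G} (hq : ∀ c, p c = q ∨ p (c - g) = q) (i k : Fin 4) :
    BlockRowsOrthogonal (fun c => DPM (dihedralRows p g i c))
      (fun c => DPM (dihedralRows p g k c)) := by
  have reflection (x : G → V ℓ) (r : G) :
      BlockRowsOrthogonal (fun c => DPM (x c)) (fun c => DPM (x (r - c))) :=
    blockRowsOrthogonal_DPM_comp_involutive hG x (sub_sub_cancel r)
  have shift {x : G → V ℓ} (hx : ∀ c, x c = q ∨ x (c - g) = q) :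
      BlockRowsOrthogonal (fun c => DPM (x c)) (fun c => DPM (x (c - g))) :=
    blockRowsOrthogonal_DPM_comp_perm_of_anchor hG (Equiv.subRight g) hx
  have hq_neg (c : G) : p (-c) = q ∨ p (-(c - g)) = q := by
    simpa only [neg_sub, sub_sub_cancel_left, or_comm] using hq (g - c)
  wlog hik : i ≤ k generalizing i k
  · exact (this k i (le_of_not_ge hik)).symm
  obtain rfl | hlt := hik.eq_or_lt
  · exact blockRowsOrthogonal_DPM_comp_involutive hG _ (σ := id) (fun _ => rfl)
  match i, k, hlt with
  | 0, 1, _ => exact shift hq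
  | 0, 2, _ => simpa [dihedralRows] using reflection p 0
  | 0, 3, _ => simpa [dihedralRows] using reflection p g
  | 1, 2, _ => simpa [dihedralRows] using reflection (fun c => p (c - g)) g
  | 1, 3, _ =>
    simpa [dihedralRows, add_sub_right_comm] using reflection (fun c => p (c - g)) (g + g)
  | 2, 3, _ => exact shift hq_neg
  | 3, k, hlt => exact absurd (Fin.le_last k) hlt.not_ge

end DihedralRows

section Interleave

variable {t : ℕ} {α β : Type*}

/-- The row of length `2 * t` with the anchor `a` at even places and `w j` at place `2 * j + 1`. -/
def interleave (a : α) (w : Fin t → α) (c : Fin (2 * t)) : α :=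
  if Even c.val then a else w ⟨c.val / 2, by omega⟩

theorem eq_map_interleave {f : α → β} {a : α} {w : Fin t → α} {F : Fin (2 * t) → β}
    (heven : ∀ j : Fin t, F ⟨2 * j.val, by omega⟩ = f a)
    (hodd : ∀ j : Fin t, F ⟨2 * j.val + 1, by omega⟩ = f (w j)) (c : Fin (2 * t)) :
    F c = f (interleave a w c) := by
  unfold interleave
  split_ifs with hc
  · rw [← heven ⟨c.val / 2, by omega⟩]
    exact congrArg F (Fin.ext (Nat.two_mul_div_two_of_even hc).symm)
  · rw [← hodd]
    have hc_odd := Nat.not_even_iff_odd.1 hc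
    exact congrArg F (Fin.ext (Nat.two_mul_div_two_add_one_of_odd hc_odd).symm)

variable [NeZero t]

theorem mk_val_add_sub_one_mod (c : Fin (2 * t)) :
    (⟨(c.val + 2 * t - 1) % (2 * t), Nat.mod_lt _ c.pos⟩ : Fin (2 * t)) = c - 1 := by
  have ht : 1 ≤ t := NeZero.one_le
  ext
  rw [Fin.val_sub, Fin.val_one', Nat.mod_eq_of_lt (show 1 < 2 * t by omega)]
  exact congrArg (· % (2 * t)) (by omega)

theorem interleave_eq_or_sub_one_eq (a : α) (w : Fin t → α) (c : Fin (2 * t)) :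
    interleave a w c = a ∨ interleave a w (c - 1) = a := by
  have heven_or : Even c.val ∨ Even (c - 1).val := by
    rw [← mk_val_add_sub_one_mod, (even_two_mul t).mod_even_iff]
    grind
  exact heven_or.imp (fun hc => if_pos hc) (fun hc => if_pos hc)

theorem interleave_neg (a : α) (w : Fin t → α) (c : Fin (2 * t)) :
    interleave a w (-c) = interleave a (fun j => w j.rev) c := by
  have hparity : Even (-c).val ↔ Even c.val := by grind
  have hrev (hc : ¬Even c.val) : (-c).val / 2 = t - (c.val / 2 + 1) := by grind
  exact ite_congr (propext hparity) (fun _ => rfl)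
    fun hc => congrArg w (Fin.ext ((hrev hc).trans (Fin.val_rev ⟨c.val / 2, by omega⟩).symm))

end Interleave

/-- Construction A with `w = 4` satisfies the orthogonality condition `H * Hᵀ = 0`;
in particular every submatrix made of the first `w` block rows (`1 ≤ w ≤ 4`) does. -/
theorem constructionA_orthogonal (ℓ t : ℕ) (ht : 1 ≤ t)
    (q : V ℓ) (z : Fin t → V ℓ)
    (B : Fin 4 → Fin (2 * t) → Matrix (V ℓ) (V ℓ) (ZMod 2))
    (hB0even : ∀ j : Fin t, B 0 ⟨2 * j.val, by have := j.isLt; omega⟩ = DPM q)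
    (hB0odd : ∀ j : Fin t, B 0 ⟨2 * j.val + 1, by have := j.isLt; omega⟩ = DPM (z j))
    (hB1 : ∀ c : Fin (2 * t),
      B 1 c = B 0 ⟨(c.val + 2 * t - 1) % (2 * t), Nat.mod_lt _ (by omega)⟩)
    (hB2even : ∀ j : Fin t, B 2 ⟨2 * j.val, by have := j.isLt; omega⟩ = DPM q)
    (hB2odd : ∀ j : Fin t, B 2 ⟨2 * j.val + 1, by have := j.isLt; omega⟩ =
      DPM (z ⟨t - 1 - j.val, by have := j.isLt; omega⟩))
    (hB3 : ∀ c : Fin (2 * t),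
      B 3 c = B 2 ⟨(c.val + 2 * t - 1) % (2 * t), Nat.mod_lt _ (by omega)⟩)
    (H : Matrix (Fin 4 × V ℓ) (Fin (2 * t) × V ℓ) (ZMod 2))
    (hH : ∀ (i : Fin 4) (a : V ℓ) (c : Fin (2 * t)) (b : V ℓ),
      H (i, a) (c, b) = B i c a b) :
    H * Hᵀ = 0 ∧
    ∀ w : ℕ, ∀ hw : 1 ≤ w ∧ w ≤ 4,
      (Matrix.of fun (p : Fin w × V ℓ) (s : Fin (2 * t) × V ℓ) =>
          H (⟨p.1.val, lt_of_lt_of_le p.1.isLt hw.2⟩, p.2) s) *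
        (Matrix.of fun (p : Fin w × V ℓ) (s : Fin (2 * t) × V ℓ) =>
          H (⟨p.1.val, lt_of_lt_of_le p.1.isLt hw.2⟩, p.2) s)ᵀ = 0 := by
  have : NeZero t := ⟨by omega⟩
  have hB0 : ∀ c, B 0 c = DPM (interleave q z c) := eq_map_interleave hB0even hB0odd
  have hB2 (c) : B 2 c = DPM (interleave q z (-c)) := by
    have hrev (j : Fin t) : (⟨t - 1 - j.val, by omega⟩ : Fin t) = j.rev :=
      Fin.ext (by simp only [Fin.val_rev]; omega)
    rw [interleave_neg]
    exact eq_map_interleave hB2even (fun j => (hB2odd j).trans (by rw [hrev])) c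
  have hB : ∀ i c, B i c = DPM (dihedralRows (interleave q z) 1 i c)
    | 0, c => hB0 c
    | 1, c => by rw [hB1, mk_val_add_sub_one_mod]; exact hB0 (c - 1)
    | 2, c => hB2 c
    | 3, c => by rw [hB3, mk_val_add_sub_one_mod]; exact hB2 (c - 1)
  have hcard : Even (Fintype.card (Fin (2 * t))) := by simp
  have hH_orthogonal : H * Hᵀ = 0 :=
    mul_transpose_eq_zero_of_blockRowsOrthogonal (fun i a c b => by rw [hH, hB])
      (blockRowsOrthogonal_dihedralRows hcard (interleave_eq_or_sub_one_eq q z))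
  refine ⟨hH_orthogonal, fun w hw => ?_⟩
  let firstRows (p : Fin w × V ℓ) : Fin 4 × V ℓ := (Fin.castLE hw.2 p.1, p.2)
  exact congrArg (fun M => M.submatrix firstRows firstRows) hH_orthogonal
end

section
/- Let u ≥ 1 and let m : Fin u → (V → 𝔽₂) be signatures each of odd weight, and let H : Matrix V (Fin u × V) 𝔽₂ be the horizontal concatenation of the corresponding dyadic matrices, i.e., H a (j, b) = m j (a + b). Then H has full rank: Matrix.rank H = 2^ℓ. -/
open Matrix

theorem circulant_single_pow {R G : Type*} [Semiring R] [AddGroup G] [Fintype G] [DecidableEq G]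
    (g : G) (r : R) (k : ℕ) :
    circulant (Pi.single g r) ^ k = circulant (Pi.single (k • g) (r ^ k)) := by
  induction k with
  | zero => simp
  | succ k ih =>
    rw [pow_succ, ih, circulant_mul]
    congr 1
    ext x
    simp [Pi.single_apply, succ_nsmul, sub_eq_iff_eq_add, pow_succ]

section CharP

variable {R G : Type*} [CommRing R] [AddCommGroup G] [Fintype G] [DecidableEq G]
  (p : ℕ) [Fact p.Prime] [CharP R p] {n : ℕ}

theorem circulant_add_pow_char_pow (v w : G → R) :
    circulant (v + w) ^ p ^ n = circulant v ^ p ^ n + circulant w ^ p ^ n := by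
  rw [circulant_add]
  exact add_pow_char_pow_of_commute _ _ (circulant_mul_comm v w)

theorem circulant_pow_char_pow_eq_sum (v : G → R) :
    circulant v ^ p ^ n = ∑ g, circulant (Pi.single (p ^ n • g) (v g ^ p ^ n)) := by
  let powHom : (G → R) →+ Matrix G G R :=
    AddMonoidHom.mk' (fun w => circulant w ^ p ^ n) (circulant_add_pow_char_pow p)
  calc circulant v ^ p ^ n = powHom (∑ g, Pi.single g (v g)) := by
        rw [Finset.univ_sum_single]; rfl
    _ = ∑ g, circulant (Pi.single g (v g)) ^ p ^ n := map_sum powHom _ _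
    _ = ∑ g, circulant (Pi.single (p ^ n • g) (v g ^ p ^ n)) := by
        simp only [circulant_single_pow]

theorem circulant_pow_char_pow_eq_scalar (hG : ∀ g : G, p ^ n • g = 0) (v : G → R) :
    circulant v ^ p ^ n = scalar G ((∑ g, v g) ^ p ^ n) := by
  simp only [circulant_pow_char_pow_eq_sum, hG, circulant_single, sum_pow_char_pow, map_sum]

theorem isUnit_circulant_iff_isUnit_sum (hG : ∀ g : G, p ^ n • g = 0) (v : G → R) :
    IsUnit (circulant v) ↔ IsUnit (∑ g, v g) := by
  have hpn : p ^ n ≠ 0 := pow_ne_zero n (Fact.out : p.Prime).ne_zero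
  rw [← isUnit_pow_iff hpn, circulant_pow_char_pow_eq_scalar p hG, scalar_apply, isUnit_diagonal,
    Pi.isUnit_iff, forall_const, isUnit_pow_iff hpn]

end CharP

theorem constructionB_fullRank_general {R G ι : Type*} [CommRing R] [AddCommGroup G] [Fintype G]
    [Fintype ι] (p : ℕ) [Fact p.Prime] [CharP R p] {n : ℕ} (hG : ∀ g : G, p ^ n • g = 0)
    (m : ι → G → R) (j : ι) (hj : IsUnit (∑ g, m j g)) (H : Matrix G (ι × G) R)
    (hH : ∀ a j b, H a (j, b) = m j (a + b)) :
    H.rank = Fintype.card G := by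
  classical
  have : Nontrivial R := CharP.nontrivial_of_char_ne_one (Fact.out : p.Prime).ne_one
  have hblock : circulant (m j) = H.submatrix id fun b => (j, -b) := by
    ext a b
    simp only [circulant_apply, submatrix_apply, id_eq, hH, sub_eq_add_neg]
  refine le_antisymm H.rank_le_card_height ?_
  calc Fintype.card G = (circulant (m j)).rank :=
        (rank_of_isUnit _ ((isUnit_circulant_iff_isUnit_sum p hG _).2 hj)).symm
    _ = (H.submatrix id fun b => (j, -b)).rank := by rw [hblock]
    _ ≤ H.rank := H.rank_submatrix_le _ _

theorem sum_zmod_two_eq_card_filter_ne_zero {α : Type*} (s : Finset α) (f : α → ZMod 2) :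
    ∑ x ∈ s, f x = (s.filter fun x => f x ≠ 0).card := by
  have eq_ite : ∀ z : ZMod 2, z = if z ≠ 0 then 1 else 0 := by decide
  rw [← Finset.sum_boole]
  exact Finset.sum_congr rfl fun x _ => eq_ite (f x)

/-- The horizontal concatenation of `u` dyadic blocks, each with a signature of odd
weight, has full rank `2^ℓ`. -/
theorem constructionB_fullRank (ℓ u : ℕ) (hu : 1 ≤ u)
    (m : Fin u → V ℓ → ZMod 2)
    (hodd : ∀ j : Fin u, Odd (Finset.univ.filter fun x => m j x ≠ 0).card)
    (H : Matrix (V ℓ) (Fin u × V ℓ) (ZMod 2))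
    (hH : ∀ (a : V ℓ) (j : Fin u) (b : V ℓ), H a (j, b) = m j (a + b)) :
    H.rank = 2 ^ ℓ := by
  have hsum : ∑ x, m ⟨0, hu⟩ x = 1 := by
    rw [sum_zmod_two_eq_card_filter_ne_zero, (hodd _).natCast_zmod_two]
  have hV : ∀ v : V ℓ, 2 ^ 1 • v = 0 := ZModModule.char_nsmul_eq_zero 2
  simpa using constructionB_fullRank_general 2 hV m ⟨0, hu⟩ (hsum ▸ isUnit_one) H hH
end

section
/- Let u be an even natural number and let m : Fin u → (V → 𝔽₂) be signatures each of odd weight, and let H : Matrix V (Fin u × V) 𝔽₂ be given by H a (j, b) = m j (a + b). Then H * Hᵀ = 0; consequently every vector in the 𝔽₂-linear span of the rows of H satisfies H.mulVec c = 0, i.e., the code with parity-check matrix H is dual-containing (C⊥ ⊆ C). -/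
/-!
A dyadic matrix is the matrix of multiplication by its signature in the group algebra of an
elementary abelian `2`-group. In characteristic two, squaring a group algebra element is additive
and sends every group element to the identity, so a dyadic block `M` satisfies
`M * Mᵀ = s ^ 2 • 1` with `s` the sum of its signature. Concatenated blocks contribute the sum of
these scalars; over `𝔽₂`, odd weight means `s = 1`, and an even number of such blocks cancels.
-/

open Matrix

section DyadicMatrix

variable {ι G R : Type*}

/-- The dyadic matrix with signature `f`. The dyadic matrices of coding theory, indexed by
bit strings under XOR, are those with `G` a finite elementary abelian `2`-group. -/
def dyadicMatrix [Add G] (f : G → R) : Matrix G G R :=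
  Matrix.of fun a b => f (a + b)

/-- The horizontal concatenation of the dyadic matrices with signatures `m j`, used as a
parity-check matrix. The column `(j, b)` is column `b` of block `j`. -/
def dyadicConcat [Add G] (m : ι → G → R) : Matrix G (ι × G) R :=
  Matrix.of fun a jb => dyadicMatrix (m jb.1) a jb.2

theorem dyadicConcat_mul_transpose_self_eq_sum [Fintype ι] [Fintype G] [Add G]
    [NonUnitalNonAssocSemiring R] (m : ι → G → R) :
    dyadicConcat m * (dyadicConcat m)ᵀ = ∑ j, dyadicMatrix (m j) * (dyadicMatrix (m j))ᵀ := by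
  ext a a'
  simp only [Matrix.sum_apply, Matrix.mul_apply, Fintype.sum_prod_type]
  rfl

variable [AddCommGroup G] [Module (ZMod 2) G] [Fintype G] [CommRing R] [CharP R 2]

theorem sum_add_left_mul_add_left_eq_zero (f : G → R) {a a' : G} (h : a ≠ a') :
    ∑ b, f (a + b) * f (a' + b) = 0 := by
  have add_self (x : G) : x + x = 0 := ZModModule.add_self x
  -- The translation `b ↦ b + (a + a')` swaps the two factors, so the terms cancel in pairs.
  refine Finset.sum_involution (fun b _ => b + (a + a')) (fun b _ => ?_) (fun b _ _ hb => ?_)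
    (fun b _ => Finset.mem_univ _) (fun b _ => ?_)
  · have left_shift : a + (b + (a + a')) = a' + b := by
      rw [show a + (b + (a + a')) = (a + a) + (a' + b) by abel, add_self, zero_add]
    have right_shift : a' + (b + (a + a')) = a + b := by
      rw [show a' + (b + (a + a')) = (a' + a') + (a + b) by abel, add_self, zero_add]
    rw [left_shift, right_shift, mul_comm (f (a' + b)), CharTwo.add_self_eq_zero]
  · exact h (add_right_cancel ((add_eq_left.mp hb).trans (add_self a').symm))
  · rw [add_assoc, add_self, add_zero]

theorem dyadicMatrix_mul_transpose_self [DecidableEq G] (f : G → R) :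
    dyadicMatrix f * (dyadicMatrix f)ᵀ = (∑ x, f x) ^ 2 • (1 : Matrix G G R) := by
  ext a a'
  have entry : (dyadicMatrix f * (dyadicMatrix f)ᵀ) a a' = ∑ b, f (a + b) * f (a' + b) := rfl
  rw [entry, Matrix.smul_apply, smul_eq_mul]
  obtain rfl | h := eq_or_ne a a'
  · calc ∑ b, f (a + b) * f (a + b) = ∑ x, f x * f x :=
          Equiv.sum_comp (Equiv.addLeft a) fun x => f x * f x
      _ = (∑ x, f x) ^ 2 * (1 : Matrix G G R) a a := by
          rw [← CharTwo.sum_mul_self, ← sq, Matrix.one_apply_eq, mul_one]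
  · rw [sum_add_left_mul_add_left_eq_zero f h, Matrix.one_apply_ne h, mul_zero]

theorem dyadicConcat_mul_transpose_self [Fintype ι] [DecidableEq G] (m : ι → G → R) :
    dyadicConcat m * (dyadicConcat m)ᵀ = (∑ j, ∑ x, m j x) ^ 2 • (1 : Matrix G G R) := by
  simp_rw [dyadicConcat_mul_transpose_self_eq_sum, dyadicMatrix_mul_transpose_self,
    ← Finset.sum_smul, CharTwo.sum_sq]

end DyadicMatrix

theorem span_row_le_ker_mulVecLin_iff {n p R : Type*} [Fintype p] [CommSemiring R]
    (H : Matrix n p R) :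
    Submodule.span R (Set.range H.row) ≤ LinearMap.ker H.mulVecLin ↔ H * Hᵀ = 0 := by
  rw [Submodule.span_le, Set.range_subset_iff, ← Matrix.ext_iff, forall_comm]
  exact forall_congr' fun _ => funext_iff

theorem sum_eq_one_iff_odd_weight {α : Type*} [Fintype α] (f : α → ZMod 2) :
    ∑ x, f x = 1 ↔ Odd (Finset.univ.filter fun x => f x ≠ 0).card := by
  have eq_indicator : ∀ z : ZMod 2, z = if z ≠ 0 then 1 else 0 := by decide
  rw [← ZMod.natCast_eq_one_iff_odd, ← Finset.sum_boole,
    ← Finset.sum_congr rfl fun x _ => eq_indicator (f x)]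

theorem constructionB_dualContaining_general {ι G R : Type*} [Fintype ι] [AddCommGroup G]
    [Module (ZMod 2) G] [Fintype G] [CommRing R] [CharP R 2] (m : ι → G → R)
    (hm : ∑ j, ∑ x, m j x = 0) :
    dyadicConcat m * (dyadicConcat m)ᵀ = 0 ∧
    ∀ c ∈ Submodule.span R (Set.range (dyadicConcat m).row), (dyadicConcat m).mulVec c = 0 := by
  classical
  have self_orthogonal : dyadicConcat m * (dyadicConcat m)ᵀ = 0 := by
    rw [dyadicConcat_mul_transpose_self, hm, zero_pow two_ne_zero, zero_smul]
  exact ⟨self_orthogonal, (span_row_le_ker_mulVecLin_iff _).mpr self_orthogonal⟩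

/-- For an even number `u` of dyadic blocks with odd-weight signatures, the horizontal
concatenation `H` satisfies `H * Hᵀ = 0`, so the code with parity-check matrix `H` is
dual-containing: every vector in the row span of `H` lies in `ker H`. -/
theorem constructionB_dualContaining (ℓ u : ℕ) (hu : Even u)
    (m : Fin u → V ℓ → ZMod 2)
    (hodd : ∀ j : Fin u, Odd (Finset.univ.filter fun x => m j x ≠ 0).card)
    (H : Matrix (V ℓ) (Fin u × V ℓ) (ZMod 2))
    (hH : ∀ (a : V ℓ) (j : Fin u) (b : V ℓ), H a (j, b) = m j (a + b)) :
    H * Hᵀ = 0 ∧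
    ∀ c ∈ Submodule.span (ZMod 2) (Set.range fun a => H a), H.mulVec c = 0 := by
  obtain rfl : H = dyadicConcat m := Matrix.ext fun a jb => hH a jb.1 jb.2
  exact constructionB_dualContaining_general m <| by
    simpa [(sum_eq_one_iff_odd_weight _).mpr (hodd _)] using ZMod.natCast_eq_zero_iff_even.mpr hu
end

section
/- Let u ≥ 2 and let m : Fin u → (V → 𝔽₂) be signatures each of the same odd weight v (with v ≥ 1), and let H : Matrix V (Fin u × V) 𝔽₂ be given by H a (j, b) = m j (a + b). Then there exists a nonzero vector c : (Fin u × V) → 𝔽₂ with H.mulVec c = 0 whose weight equals 2v. Consequently, the minimum distance of the code with parity-check matrix H is at most 2v. -/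
/-!
The blocks commute, so the relation `Mᵢ mⱼ - Mⱼ mᵢ = 0` between the signatures `mᵢ` and `mⱼ` of two
distinct blocks `Mᵢ` and `Mⱼ` makes the vector with `mⱼ` in block `i` and `-mᵢ` in block `j` a
codeword. Dyadic matrices are the circulant matrices of `V ℓ`, where `a + b = a - b`.
-/

open Function Matrix

section TwoBlocks

variable {ι α β R : Type*}

/-- The horizontal concatenation of the matrices `A k`, with columns indexed by pairs of a block
and a column of that block: the shape of a parity-check matrix built from `ι`-many blocks. -/
def blockRow (A : ι → Matrix α β R) : Matrix α (ι × β) R :=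
  of fun a p => A p.1 a p.2

variable [Fintype ι] [Fintype β]

theorem blockRow_mulVec_uncurry [NonUnitalNonAssocSemiring R] (A : ι → Matrix α β R)
    (x : ι → β → R) : blockRow A *ᵥ uncurry x = ∑ k, A k *ᵥ x k := by
  ext a
  simp only [mulVec, dotProduct, blockRow, of_apply, Fintype.sum_prod_type, uncurry_apply_pair,
    Finset.sum_apply]

theorem hammingNorm_uncurry [Zero R] [DecidableEq R] (x : ι → β → R) :
    hammingNorm (uncurry x) = ∑ k, hammingNorm (x k) := by
  simp only [hammingNorm, Finset.card_filter, Fintype.sum_prod_type]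
  rfl

variable [DecidableEq ι]

theorem blockRow_mulVec_uncurry_single_sub_single [NonUnitalNonAssocRing R] (A : ι → Matrix α β R)
    (i j : ι) (x y : β → R) :
    blockRow A *ᵥ uncurry (Pi.single i x - Pi.single j y) = A i *ᵥ x - A j *ᵥ y := by
  have hsingle (k l : ι) (z : β → R) :
      A k *ᵥ (Pi.single l z : ι → β → R) k = if k = l then A k *ᵥ z else 0 := by
    rw [Pi.single_apply, apply_ite (A k *ᵥ ·), mulVec_zero]
  simp only [blockRow_mulVec_uncurry, Pi.sub_apply, mulVec_sub, Finset.sum_sub_distrib,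
    hsingle, Finset.sum_ite_eq', Finset.mem_univ, if_true]

theorem hammingNorm_uncurry_single_sub_single [AddGroup R] [DecidableEq R] {i j : ι} (hij : i ≠ j)
    (x y : β → R) :
    hammingNorm (uncurry (Pi.single i x - Pi.single j y : ι → β → R)) =
      hammingNorm x + hammingNorm y := by
  rw [hammingNorm_uncurry, Fintype.sum_eq_add i j hij]
  · simp [hij, hij.symm, hammingNorm]
  · rintro k ⟨hki, hkj⟩
    simp [hki, hkj]

end TwoBlocks

theorem circulant_mulVec_comm {G R : Type*} [AddCommGroup G] [Fintype G]
    [NonUnitalCommSemiring R] (f g : G → R) : circulant f *ᵥ g = circulant g *ᵥ f :=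
  circulant_injective <| by rw [← circulant_mul, circulant_mul_comm, circulant_mul]

theorem constructionB_minDist_le_general {ι G R : Type*} [Fintype ι] [Nontrivial ι]
    [AddCommGroup G] [Fintype G] [NonUnitalCommRing R] [DecidableEq R] {v : ℕ} (hv : 1 ≤ v)
    (m : ι → G → R) (hw : ∀ j, hammingNorm (m j) = v) (H : Matrix G (ι × G) R)
    (hH : ∀ a j b, H a (j, b) = m j (a - b)) :
    ∃ c : ι × G → R, c ≠ 0 ∧ H *ᵥ c = 0 ∧ hammingNorm c = 2 * v := by
  classical
  obtain ⟨i, j, hij⟩ := exists_pair_ne ι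
  let c : ι × G → R := uncurry (Pi.single i (m j) - Pi.single j (m i))
  have hweight : hammingNorm c = 2 * v := by
    rw [hammingNorm_uncurry_single_sub_single hij, hw, hw, two_mul]
  have hblock : H = blockRow fun k => circulant (m k) := by
    ext a ⟨k, b⟩
    exact hH a k b
  refine ⟨c, hammingNorm_ne_zero_iff.mp (by omega), ?_, hweight⟩
  rw [hblock, blockRow_mulVec_uncurry_single_sub_single, circulant_mulVec_comm, sub_self]

/-- If `u ≥ 2` dyadic blocks all have signatures of common odd weight `v ≥ 1`, the code
with parity-check matrix `H` has a nonzero codeword of weight `2v`; hence its minimum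
distance is at most `2v`. -/
theorem constructionB_minDist_le (ℓ u v : ℕ) (hu : 2 ≤ u) (hv1 : 1 ≤ v) (hv : Odd v)
    (m : Fin u → V ℓ → ZMod 2)
    (hw : ∀ j : Fin u, (Finset.univ.filter fun x => m j x ≠ 0).card = v)
    (H : Matrix (V ℓ) (Fin u × V ℓ) (ZMod 2))
    (hH : ∀ (a : V ℓ) (j : Fin u) (b : V ℓ), H a (j, b) = m j (a + b)) :
    ∃ c : (Fin u × V ℓ) → ZMod 2, c ≠ 0 ∧ H.mulVec c = 0 ∧
      (Finset.univ.filter fun p => c p ≠ 0).card = 2 * v := by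
  have := Fin.nontrivial_iff_two_le.mpr hu
  exact constructionB_minDist_le_general hv1 m hw H fun a j b => by rw [hH, ZModModule.sub_eq_add]
end

section
/- Let ρ : Fin 2 → Fin 2 → V and let M : Matrix (Fin 2 × V) (Fin 2 × V) 𝔽₂ be the 2 × 2 array of DPMs with M (i, a) (j, b) = 1 if a + b = ρ i j and 0 otherwise. Then every cycle in the Tanner graph of M has the same length: for any two cycles c₁ and c₂ in the Tanner graph of M, the length of c₁ equals the length of c₂. -/
/-- The Tanner graph of a binary matrix `H`: `Sum.inl r` and `Sum.inr c` are adjacent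
iff `H r c = 1`, and there are no other adjacencies. -/
def tanner {R C : Type*} (H : Matrix R C (ZMod 2)) : SimpleGraph (R ⊕ C) :=
  SimpleGraph.fromRel fun x y =>
    match x, y with
    | Sum.inl r, Sum.inr c => H r c = 1
    | _, _ => False

/-!
Unroll a cycle to an infinite walk `x` that never backtracks. Along `x` rows and columns alternate,
and not backtracking forces the block index to flip at every second step, so `x` runs through the
four blocks of the array again and again. One such turn adds the alternating sum `s` of the four
shifts, up to sign and conjugation, to the group coordinate. Hence `x` returns to its starting point
exactly at the multiples of `4 * addOrderOf s`, and this number is the length of the cycle.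
-/

section NonbacktrackingWalk

variable {α : Type*} {Γ : SimpleGraph α}

/-- An infinite walk in `Γ`, given by its sequence of vertices, that never immediately returns along
the edge it has just used. Cycles are studied through their periodic unrolling of this kind. -/
structure IsNonbacktracking (Γ : SimpleGraph α) (x : ℕ → α) : Prop where
  adj : ∀ k, Γ.Adj (x k) (x (k + 1))
  ne : ∀ k, x (k + 2) ≠ x k

lemma IsNonbacktracking.shift {x : ℕ → α} (hx : IsNonbacktracking Γ x) :
    IsNonbacktracking Γ fun k => x (k + 1) where
  adj k := hx.adj (k + 1)
  ne k := hx.ne (k + 1)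

lemma adj_getVert_mod_length {v : α} (c : Γ.Walk v v) (hc : 0 < c.length) (k : ℕ) :
    Γ.Adj (c.getVert (k % c.length)) (c.getVert ((k + 1) % c.length)) := by
  have hlt := Nat.mod_lt k hc
  have hadj := c.adj_getVert_succ hlt
  rw [← Nat.mod_add_mod]
  rcases (Nat.add_one_le_of_lt hlt).lt_or_eq with h | h
  · rwa [Nat.mod_eq_of_lt h]
  · rw [h, c.getVert_length] at hadj
    rwa [h, Nat.mod_self, c.getVert_zero]

lemma exists_isNonbacktracking_of_isCycle {v : α} {c : Γ.Walk v v} (hc : c.IsCycle) :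
    ∃ x : ℕ → α, IsNonbacktracking Γ x ∧ ∀ k l, x k = x l ↔ k ≡ l [MOD c.length] := by
  have hlen := hc.three_le_length
  have hpos : 0 < c.length := by omega
  have heq (k l : ℕ) :
      c.getVert (k % c.length) = c.getVert (l % c.length) ↔ k ≡ l [MOD c.length] :=
    hc.getVert_injOn'.eq_iff (Nat.le_sub_one_of_lt (Nat.mod_lt k hpos))
      (Nat.le_sub_one_of_lt (Nat.mod_lt l hpos))
  refine ⟨fun k => c.getVert (k % c.length), ⟨adj_getVert_mod_length c hpos, fun k h => ?_⟩, heq⟩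
  have hdvd : c.length ∣ 2 :=
    Nat.modEq_zero_iff_dvd.1 (Nat.ModEq.add_left_cancel' k ((heq _ _).1 h))
  have := Nat.le_of_dvd two_pos hdvd
  omega

end NonbacktrackingWalk

section TannerGraph

variable {R C : Type*} {H : Matrix R C (ZMod 2)}

lemma tanner_adj_inl_iff {r : R} {y : R ⊕ C} :
    (tanner H).Adj (Sum.inl r) y ↔ ∃ c, y = Sum.inr c ∧ H r c = 1 := by
  rcases y with r' | c <;> simp [tanner]

lemma tanner_adj_inr_iff {c : C} {y : R ⊕ C} :
    (tanner H).Adj (Sum.inr c) y ↔ ∃ r, y = Sum.inl r ∧ H r c = 1 := by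
  rcases y with r | c' <;> simp [tanner]

end TannerGraph

lemma fin_two_eq_rev_iff_ne {i i' : Fin 2} : i' = i.rev ↔ i' ≠ i := by
  decide +revert

section Holonomy

variable {G : Type*} [AddGroup G]

/-- The translation of the group coordinate caused by one turn through the four blocks of the array
with shifts `ρ`, starting in row block `i` and leaving it through column block `j`. On `Fin 2`,
`Fin.rev` exchanges the two indices. -/
def holonomy (ρ : Fin 2 → Fin 2 → G) (i j : Fin 2) : G :=
  ρ i j.rev - ρ i.rev j.rev + (ρ i.rev j - ρ i j)

lemma holonomy_rev_right (ρ : Fin 2 → Fin 2 → G) (i j : Fin 2) :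
    holonomy ρ i j.rev = -holonomy ρ i j := by
  simp only [holonomy, Fin.rev_rev, neg_add_rev, neg_sub]

lemma addSemiconjBy_holonomy_rev_left (ρ : Fin 2 → Fin 2 → G) (i j : Fin 2) :
    AddSemiconjBy (ρ i.rev j - ρ i j) (holonomy ρ i j) (-holonomy ρ i.rev j) := by
  simp only [AddSemiconjBy, holonomy, Fin.rev_rev, neg_add_rev, neg_sub, add_assoc]

lemma addOrderOf_holonomy (ρ : Fin 2 → Fin 2 → G) (i j : Fin 2) :
    addOrderOf (holonomy ρ i j) = addOrderOf (holonomy ρ 0 0) := by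
  have hrow (j : Fin 2) : addOrderOf (holonomy ρ 1 j) = addOrderOf (holonomy ρ 0 j) := by
    rw [(addSemiconjBy_holonomy_rev_left ρ 0 j).addOrderOf_eq, addOrderOf_neg]
    rfl
  have hcol (i : Fin 2) : addOrderOf (holonomy ρ i 1) = addOrderOf (holonomy ρ i 0) := by
    rw [← addOrderOf_neg (holonomy ρ i 0), ← holonomy_rev_right]
    rfl
  fin_cases i <;> fin_cases j <;> simp [hrow, hcol]

end Holonomy

/-- `M` is an array of blocks indexed by `I × J`, and its block `(i, j)` has a one exactly at the
positions `(a, b)` with `a + b = ρ i j`. For `G = V ℓ` the blocks are dyadic permutation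
matrices. -/
def IsShiftArray {I J G : Type*} [Add G] (M : Matrix (I × G) (J × G) (ZMod 2)) (ρ : I → J → G) :
    Prop :=
  ∀ i a j b, M (i, a) (j, b) = 1 ↔ a + b = ρ i j

namespace IsShiftArray

variable {G : Type*} [AddGroup G]

lemma eq_inl_of_adj {J : Type*} {M : Matrix (Fin 2 × G) (J × G) (ZMod 2)} {ρ : Fin 2 → J → G}
    (hM : IsShiftArray M ρ) {i : Fin 2} {a b : G} {j : J} {y : (Fin 2 × G) ⊕ (J × G)}
    (h₁ : (tanner M).Adj (Sum.inl (i, a)) (Sum.inr (j, b)))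
    (h₂ : (tanner M).Adj (Sum.inr (j, b)) y) (hne : y ≠ Sum.inl (i, a)) :
    y = Sum.inl (i.rev, ρ i.rev j - ρ i j + a) := by
  obtain ⟨⟨i', a'⟩, rfl, hsum'⟩ := tanner_adj_inr_iff.1 h₂
  obtain ⟨-, ⟨⟩, hsum⟩ := tanner_adj_inl_iff.1 h₁
  rw [hM] at hsum hsum'
  have ha' : a' = ρ i' j - ρ i j + a := by
    rw [← hsum, ← hsum']
    simp only [sub_eq_add_neg, neg_add_rev, add_assoc, add_neg_cancel_left, neg_add_cancel,
      add_zero]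
  have hi : i' = i.rev := by
    rw [fin_two_eq_rev_iff_ne]
    rintro rfl
    exact hne (by rw [ha', sub_self, zero_add])
  rw [ha', hi]

lemma exists_eq_inr_of_adj {I : Type*} {M : Matrix (I × G) (Fin 2 × G) (ZMod 2)}
    {ρ : I → Fin 2 → G} (hM : IsShiftArray M ρ) {i : I} {a b : G} {j : Fin 2}
    {y : (I × G) ⊕ (Fin 2 × G)} (h₁ : (tanner M).Adj (Sum.inr (j, b)) (Sum.inl (i, a)))
    (h₂ : (tanner M).Adj (Sum.inl (i, a)) y) (hne : y ≠ Sum.inr (j, b)) :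
    ∃ b', y = Sum.inr (j.rev, b') := by
  obtain ⟨⟨j', b'⟩, rfl, hsum'⟩ := tanner_adj_inl_iff.1 h₂
  obtain ⟨-, ⟨⟩, hsum⟩ := tanner_adj_inr_iff.1 h₁
  rw [hM] at hsum hsum'
  have hj : j' = j.rev := by
    rw [fin_two_eq_rev_iff_ne]
    rintro rfl
    exact hne (by rw [add_left_cancel (hsum'.trans hsum.symm)])
  exact ⟨b', by rw [hj]⟩

variable {ρ : Fin 2 → Fin 2 → G} {M : Matrix (Fin 2 × G) (Fin 2 × G) (ZMod 2)}
  {x : ℕ → (Fin 2 × G) ⊕ (Fin 2 × G)} {i j : Fin 2} {a b : G}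

lemma nonbacktracking_add_two (hM : IsShiftArray M ρ) (hx : IsNonbacktracking (tanner M) x) {k : ℕ}
    (h₀ : x k = Sum.inl (i, a)) (h₁ : x (k + 1) = Sum.inr (j, b)) :
    x (k + 2) = Sum.inl (i.rev, ρ i.rev j - ρ i j + a) ∧
      ∃ b', x (k + 3) = Sum.inr (j.rev, b') := by
  have h₂ : x (k + 2) = Sum.inl (i.rev, ρ i.rev j - ρ i j + a) :=
    hM.eq_inl_of_adj (h₀ ▸ h₁ ▸ hx.adj k) (h₁ ▸ hx.adj (k + 1)) (h₀ ▸ hx.ne k)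
  exact ⟨h₂, hM.exists_eq_inr_of_adj (h₁ ▸ h₂ ▸ hx.adj (k + 1)) (h₂ ▸ hx.adj (k + 2))
    (h₁ ▸ hx.ne (k + 1))⟩

lemma nonbacktracking_add_four (hM : IsShiftArray M ρ) (hx : IsNonbacktracking (tanner M) x) {k : ℕ}
    (h₀ : x k = Sum.inl (i, a)) (h₁ : x (k + 1) = Sum.inr (j, b)) :
    x (k + 4) = Sum.inl (i, holonomy ρ i j + a) ∧ ∃ b', x (k + 5) = Sum.inr (j, b') := by
  obtain ⟨h₂, b₃, h₃⟩ := hM.nonbacktracking_add_two hx h₀ h₁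
  simpa only [Fin.rev_rev, holonomy, add_assoc] using hM.nonbacktracking_add_two hx h₂ h₃

lemma nonbacktracking_four_mul (hM : IsShiftArray M ρ) (hx : IsNonbacktracking (tanner M) x)
    (h₀ : x 0 = Sum.inl (i, a)) (h₁ : x 1 = Sum.inr (j, b)) (m : ℕ) :
    x (4 * m) = Sum.inl (i, m • holonomy ρ i j + a) ∧
      ∃ b', x (4 * m + 1) = Sum.inr (j, b') := by
  induction m with
  | zero => exact ⟨by simpa using h₀, b, h₁⟩
  | succ m ih =>
    obtain ⟨hrow, b', hcol⟩ := ih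
    simpa only [mul_add_one, succ_nsmul', add_assoc] using hM.nonbacktracking_add_four hx hrow hcol

lemma four_dvd_of_nonbacktracking_eq_start (hM : IsShiftArray M ρ)
    (hx : IsNonbacktracking (tanner M) x) (h₀ : x 0 = Sum.inl (i, a)) (h₁ : x 1 = Sum.inr (j, b))
    {k : ℕ} (hk : x k = x 0) : 4 ∣ k := by
  obtain ⟨hrow, b₁, hcol⟩ := hM.nonbacktracking_four_mul hx h₀ h₁ (k / 4)
  obtain ⟨hrow₂, b₃, hcol₃⟩ := hM.nonbacktracking_add_two hx hrow hcol
  rw [Nat.dvd_iff_mod_eq_zero]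
  rw [h₀, ← Nat.div_add_mod k 4] at hk
  have hlt : k % 4 < 4 := Nat.mod_lt k four_pos
  generalize k % 4 = r at hk hlt ⊢
  interval_cases r
  · rfl
  · cases hcol.symm.trans hk
  · cases fin_two_eq_rev_iff_ne.1 rfl (congrArg Prod.fst (Sum.inl.inj (hrow₂.symm.trans hk)))
  · cases hcol₃.symm.trans hk

lemma nonbacktracking_eq_start_iff (hM : IsShiftArray M ρ) (hx : IsNonbacktracking (tanner M) x)
    (h₀ : x 0 = Sum.inl (i, a)) (k : ℕ) :
    x k = x 0 ↔ 4 * addOrderOf (holonomy ρ 0 0) ∣ k := by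
  obtain ⟨⟨j, b⟩, h₁, -⟩ := tanner_adj_inl_iff.1 (h₀ ▸ hx.adj 0)
  have hfour_mul (m : ℕ) : x (4 * m) = x 0 ↔ 4 * addOrderOf (holonomy ρ 0 0) ∣ 4 * m := by
    rw [(hM.nonbacktracking_four_mul hx h₀ h₁ m).1, h₀, Nat.mul_dvd_mul_iff_left four_pos,
      ← addOrderOf_holonomy ρ i j, addOrderOf_dvd_iff_nsmul_eq_zero]
    simp only [Sum.inl.injEq, Prod.mk.injEq, true_and, add_eq_right]
  constructor
  · intro hk
    obtain ⟨m, rfl⟩ := hM.four_dvd_of_nonbacktracking_eq_start hx h₀ h₁ hk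
    exact (hfour_mul m).1 hk
  · intro hk
    obtain ⟨m, rfl⟩ := dvd_of_mul_right_dvd hk
    exact (hfour_mul m).2 hk

end IsShiftArray

theorem dpmArray2x2_cycles_same_length_general {G : Type*} [AddGroup G] {ρ : Fin 2 → Fin 2 → G}
    {M : Matrix (Fin 2 × G) (Fin 2 × G) (ZMod 2)} (hM : IsShiftArray M ρ)
    {v : (Fin 2 × G) ⊕ (Fin 2 × G)} {c : (tanner M).Walk v v} (hc : c.IsCycle) :
    c.length = 4 * addOrderOf (holonomy ρ 0 0) := by
  obtain ⟨x, hx, heq⟩ := exists_isNonbacktracking_of_isCycle hc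
  rw [← Nat.dvd_right_iff_eq]
  intro k
  rcases h₀ : x 0 with ⟨i, a⟩ | ⟨j, b⟩
  · rw [← hM.nonbacktracking_eq_start_iff hx h₀, heq, Nat.modEq_zero_iff_dvd]
  · obtain ⟨⟨i, a⟩, h₁, -⟩ := tanner_adj_inr_iff.1 (h₀ ▸ hx.adj 0)
    rw [← hM.nonbacktracking_eq_start_iff hx.shift h₁, heq,
      Nat.ModEq.add_iff_right rfl, Nat.modEq_zero_iff_dvd]

/-- All cycles in the Tanner graph of a `2 × 2` array of dyadic permutation matrices
have the same length. -/
theorem dpmArray2x2_cycles_same_length (ℓ : ℕ)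
    (ρ : Fin 2 → Fin 2 → V ℓ)
    (M : Matrix (Fin 2 × V ℓ) (Fin 2 × V ℓ) (ZMod 2))
    (hM : ∀ (i : Fin 2) (a : V ℓ) (j : Fin 2) (b : V ℓ),
      M (i, a) (j, b) = if a + b = ρ i j then 1 else 0)
    (v₁ v₂ : (Fin 2 × V ℓ) ⊕ (Fin 2 × V ℓ))
    (c₁ : (tanner M).Walk v₁ v₁) (c₂ : (tanner M).Walk v₂ v₂)
    (h₁ : c₁.IsCycle) (h₂ : c₂.IsCycle) :
    c₁.length = c₂.length := by
  have hshift : IsShiftArray M ρ := fun i a j b => by simp [hM]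
  rw [dpmArray2x2_cycles_same_length_general hshift h₁,
    dpmArray2x2_cycles_same_length_general hshift h₂]
end

section
/- Let ρ : Fin 2 → Fin 2 → V and let M : Matrix (Fin 2 × V) (Fin 2 × V) 𝔽₂ be the 2 × 2 array of DPMs with M (i, a) (j, b) = 1 if a + b = ρ i j and 0 otherwise. Set α := ρ 0 0 + ρ 1 1 + ρ 0 1 + ρ 1 0 ∈ V. Then the girth of the Tanner graph of M equals 4 · addOrderOf α; in particular it is 4 if α = 0 and 8 otherwise. -/
/-!
Replace `V` by any additive group. Leaving rows through the blocks `(i, i + 1)` and columns through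
the blocks `(j, j)` defines a permutation of the vertices, and the edges of the Tanner graph are
exactly the pairs of a vertex and its image. A cycle never backtracks, so it runs once around an
orbit of this permutation, and the girth is the orbit length. Every orbit meets block row `0`, where
the first return takes four steps, one through each block, and translates `a` to
`ρ 0 0 - ρ 1 0 + ρ 1 1 - ρ 0 1 + a`; so the orbit length is four times the order of this
translation. Over `𝔽₂` the signs disappear and the order is `1` or `2`.
-/

open Function

section PermGraph

variable {X : Type*} {σ : Equiv.Perm X}

theorem minimalPeriod_apply_of_injective {f : X → X} (hf : Injective f) (x : X) :
    minimalPeriod f (f x) = minimalPeriod f x :=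
  minimalPeriod_eq_minimalPeriod_iff.mpr fun n ↦ by
    rw [IsPeriodicPt, IsFixedPt, (Commute.iterate_self f n).eq, hf.eq_iff, IsPeriodicPt, IsFixedPt]

theorem isPeriodicPt_inv_iff {n : ℕ} {x : X} :
    IsPeriodicPt (σ⁻¹ : Equiv.Perm X) n x ↔ IsPeriodicPt σ n x := by
  simp only [IsPeriodicPt, IsFixedPt, Equiv.Perm.iterate_eq_pow, inv_pow,
    Equiv.Perm.inv_eq_iff_eq]
  exact eq_comm

/-- The graph of a permutation `σ`, in which every `x` that `σ` moves is joined to `σ x`. Its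
connected components are the orbits of `σ`. -/
def permGraph (σ : Equiv.Perm X) : SimpleGraph X :=
  SimpleGraph.fromRel fun x y ↦ σ x = y

theorem permGraph_adj {x y : X} : (permGraph σ).Adj x y ↔ x ≠ y ∧ (σ x = y ∨ σ y = x) :=
  SimpleGraph.fromRel_adj ..

theorem permGraph_inv (σ : Equiv.Perm X) : permGraph σ⁻¹ = permGraph σ := by
  ext x y
  simp only [permGraph_adj, Equiv.Perm.inv_eq_iff_eq]
  grind

namespace permGraph

variable {G : SimpleGraph X} {u : X} {w : G.Walk u u}

theorem getVert_eq_iterate_of_snd_eq (hG : G ≤ permGraph σ) (hw : w.IsCycle)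
    (hsnd : σ u = w.snd) {k : ℕ} (hk : k ≤ w.length) : w.getVert k = σ^[k] u := by
  induction k using Nat.twoStepInduction with
  | zero => simp
  | one => exact hsnd.symm
  | more k ih₀ ih₁ =>
    rw [iterate_succ_apply', ← ih₁ (by lia)]
    obtain forward | backward := (permGraph_adj.mp (hG (w.adj_getVert_succ hk))).2
    · exact forward.symm
    · have return_back : w.getVert (k + 2) = w.getVert k := by
        rw [ih₁ (by lia), iterate_succ_apply', ← ih₀ (by lia)] at backward
        exact σ.injective backward
      exact absurd return_back.symm (hw.getVert_sub_one_ne_getVert_add_one (i := k + 1) (by lia))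

theorem isPeriodicPt_length_of_snd_eq (hG : G ≤ permGraph σ) (hw : w.IsCycle)
    (hsnd : σ u = w.snd) : IsPeriodicPt σ w.length u :=
  (getVert_eq_iterate_of_snd_eq hG hw hsnd le_rfl).symm.trans w.getVert_length

theorem isPeriodicPt_length (hG : G ≤ permGraph σ) (hw : w.IsCycle) :
    IsPeriodicPt σ w.length u := by
  obtain forward | backward := (permGraph_adj.mp (hG (w.adj_snd hw.not_nil))).2
  · exact isPeriodicPt_length_of_snd_eq hG hw forward
  · exact isPeriodicPt_inv_iff.mp <|
      isPeriodicPt_length_of_snd_eq (hG.trans_eq (permGraph_inv σ).symm) hw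
        (Equiv.Perm.inv_eq_iff_eq.mpr backward.symm)

theorem exists_isCycle_length_eq_minimalPeriod {x : X} (hx : 3 ≤ minimalPeriod σ x) :
    ∃ (u : X) (c : (permGraph σ).Walk u u), c.IsCycle ∧ c.length = minimalPeriod σ x := by
  rw [← SimpleGraph.cycleGraph_isContained_iff hx]
  obtain ⟨m, hm⟩ : ∃ m, minimalPeriod σ x = m + 2 := Nat.exists_eq_add_of_le' (by lia)
  rw [hm]
  let orbit (i : Fin (m + 2)) : X := σ^[i] x
  have orbit_add_one (i : Fin (m + 2)) : orbit (i + 1) = σ (orbit i) := by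
    rw [← iterate_succ_apply' σ, ← iterate_mod_minimalPeriod_eq, hm]
    simp [orbit, Fin.val_add]
  have orbit_injective : Injective orbit := fun i j hij ↦
    Fin.ext <| iterate_injOn_Iio_minimalPeriod
      (i.isLt.trans_eq hm.symm) (j.isLt.trans_eq hm.symm) hij
  have orbit_adj {i j : Fin (m + 2)} (hij : (SimpleGraph.cycleGraph (m + 2)).Adj i j) :
      (permGraph σ).Adj (orbit i) (orbit j) := by
    refine permGraph_adj.mpr ⟨orbit_injective.ne hij.ne, ?_⟩
    rw [SimpleGraph.cycleGraph_adj, sub_eq_iff_eq_add', sub_eq_iff_eq_add'] at hij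
    obtain rfl | rfl := hij
    · exact .inr (orbit_add_one j).symm
    · exact .inl (orbit_add_one i).symm
  exact ⟨SimpleGraph.Hom.toCopy ⟨orbit, orbit_adj⟩ orbit_injective⟩

theorem girth_eq_of_minimalPeriod_eq [Nonempty X] {n : ℕ} (hn : 3 ≤ n)
    (hσ : ∀ x, minimalPeriod σ x = n) : (permGraph σ).girth = n := by
  obtain ⟨x⟩ := ‹Nonempty X›
  obtain ⟨u, c, hc, hlen⟩ := exists_isCycle_length_eq_minimalPeriod (hn.trans_eq (hσ x).symm)
  rw [hσ x] at hlen
  refine le_antisymm (hlen ▸ SimpleGraph.girth_le_length hc) ?_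
  obtain ⟨v, d, hd, hgirth⟩ := SimpleGraph.exists_girth_eq_length.mpr fun h ↦ h c hc
  rw [hgirth, ← hσ v]
  exact (isPeriodicPt_length le_rfl hd).minimalPeriod_le (by grind [hd.three_le_length])

end permGraph

end PermGraph

theorem tanner_adj_inl_inr {R C : Type*} (H : Matrix R C (ZMod 2)) (r : R) (c : C) :
    (tanner H).Adj (.inl r) (.inr c) ↔ H r c = 1 := by
  simp [tanner]

section DPMArray

variable {G : Type*} [AddGroup G]

/-- The successor of a vertex when the Tanner graph of the array with shifts `ρ` is traversed
through the blocks `(0, 1)`, `(1, 1)`, `(1, 0)`, `(0, 0)` in this cyclic order. Block indices are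
added in `Fin 2`, so `i + 1` is the index other than `i`. -/
def nextVertex (ρ : Fin 2 → Fin 2 → G) : Equiv.Perm ((Fin 2 × G) ⊕ (Fin 2 × G)) where
  toFun := Sum.elim (fun r ↦ .inr (r.1 + 1, -r.2 + ρ r.1 (r.1 + 1)))
    (fun c ↦ .inl (c.1, ρ c.1 c.1 - c.2))
  invFun := Sum.elim (fun r ↦ .inr (r.1, -r.2 + ρ r.1 r.1))
    (fun c ↦ .inl (c.1 + 1, ρ (c.1 + 1) c.1 - c.2))
  left_inv := by
    rintro (⟨i, a⟩ | ⟨j, b⟩) <;> simp [add_assoc, sub_eq_add_neg]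
  right_inv := by
    rintro (⟨i, a⟩ | ⟨j, b⟩) <;> simp [add_assoc, sub_eq_add_neg]

theorem tanner_eq_permGraph_nextVertex [DecidableEq G] {ρ : Fin 2 → Fin 2 → G}
    {M : Matrix (Fin 2 × G) (Fin 2 × G) (ZMod 2)}
    (hM : ∀ i a j b, M (i, a) (j, b) = if a + b = ρ i j then 1 else 0) :
    tanner M = permGraph (nextVertex ρ) := by
  have row_column (i : Fin 2) (a : G) (j : Fin 2) (b : G) :
      (tanner M).Adj (.inl (i, a)) (.inr (j, b)) ↔
        (permGraph (nextVertex ρ)).Adj (.inl (i, a)) (.inr (j, b)) := by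
    obtain rfl | rfl : j = i ∨ j = i + 1 := by decide +revert
    · simpa [tanner_adj_inl_inr, hM, permGraph_adj, nextVertex, sub_eq_iff_eq_add] using eq_comm
    · simpa [tanner_adj_inl_inr, hM, permGraph_adj, nextVertex, neg_add_eq_iff_eq_add] using eq_comm
  ext (⟨i, a⟩ | ⟨j, b⟩) (⟨i', a'⟩ | ⟨j', b'⟩)
  · simp [tanner, permGraph_adj, nextVertex]
  · exact row_column ..
  · rw [SimpleGraph.adj_comm, row_column, SimpleGraph.adj_comm]
  · simp [tanner, permGraph_adj, nextVertex]

namespace nextVertex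

/-- The position of a vertex in the cyclic order of the four block rows and columns in which
`nextVertex` visits them. -/
def phase {A : Type*} : (Fin 2 × A) ⊕ (Fin 2 × A) → ZMod 4 :=
  Sum.elim (fun r ↦ ![0, 2] r.1) (fun c ↦ ![3, 1] c.1)

variable (ρ : Fin 2 → Fin 2 → G)

theorem semiconj_phase : Semiconj phase (nextVertex ρ) (1 + ·) := by
  rintro (⟨i, a⟩ | ⟨j, b⟩)
  · fin_cases i <;> rfl
  · fin_cases j <;> rfl

theorem four_dvd_of_isPeriodicPt {n : ℕ} {x : (Fin 2 × G) ⊕ (Fin 2 × G)}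
    (hx : IsPeriodicPt (nextVertex ρ) n x) : 4 ∣ n := by
  have hphase : (1 + ·)^[n] (phase x) = phase x := hx.map (semiconj_phase ρ)
  rw [add_left_iterate_apply, add_eq_right, nsmul_one] at hphase
  exact (ZMod.natCast_eq_zero_iff n 4).mp hphase

theorem semiconj_iterate_four : Semiconj (fun a ↦ .inl (0, a))
    (ρ 0 0 - ρ 1 0 + ρ 1 1 - ρ 0 1 + ·) (nextVertex ρ)^[4] := by
  intro a
  simp [nextVertex, sub_eq_add_neg, add_assoc]

theorem isPeriodicPt_four_mul_iff {k : ℕ} {a : G} :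
    IsPeriodicPt (nextVertex ρ) (4 * k) (.inl (0, a)) ↔
      addOrderOf (ρ 0 0 - ρ 1 0 + ρ 1 1 - ρ 0 1) ∣ k := by
  have hiter := (semiconj_iterate_four ρ).iterate_right k a
  rw [IsPeriodicPt, IsFixedPt, iterate_mul, ← hiter, addOrderOf_dvd_iff_nsmul_eq_zero]
  simp

theorem minimalPeriod_inl_zero (a : G) : minimalPeriod (nextVertex ρ) (.inl (0, a)) =
    4 * addOrderOf (ρ 0 0 - ρ 1 0 + ρ 1 1 - ρ 0 1) := by
  refine Nat.dvd_antisymm ?_ ?_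
  · exact ((isPeriodicPt_four_mul_iff ρ).mpr dvd_rfl).minimalPeriod_dvd
  · have hper := isPeriodicPt_minimalPeriod (nextVertex ρ) (.inl (0, a))
    obtain ⟨k, hk⟩ := four_dvd_of_isPeriodicPt ρ hper
    rw [hk] at hper ⊢
    exact mul_dvd_mul_left 4 ((isPeriodicPt_four_mul_iff ρ).mp hper)

theorem minimalPeriod_eq (x : (Fin 2 × G) ⊕ (Fin 2 × G)) :
    minimalPeriod (nextVertex ρ) x = 4 * addOrderOf (ρ 0 0 - ρ 1 0 + ρ 1 1 - ρ 0 1) := by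
  have hnext := minimalPeriod_apply_of_injective (nextVertex ρ).injective
  have row_zero := minimalPeriod_inl_zero ρ
  have column_zero (b : G) := (hnext (.inr (0, b))).symm.trans (row_zero _)
  have row_one (a : G) := (hnext (.inl (1, a))).symm.trans (column_zero _)
  have column_one (b : G) := (hnext (.inr (1, b))).symm.trans (row_one _)
  obtain ⟨i, a⟩ | ⟨j, b⟩ := x
  · fin_cases i
    exacts [row_zero a, row_one a]
  · fin_cases j
    exacts [column_zero b, column_one b]

end nextVertex

end DPMArray

theorem dpmArray2x2_girth_general {G : Type*} [AddGroup G] [DecidableEq G]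
    (ρ : Fin 2 → Fin 2 → G)
    (M : Matrix (Fin 2 × G) (Fin 2 × G) (ZMod 2))
    (hM : ∀ (i : Fin 2) (a : G) (j : Fin 2) (b : G),
      M (i, a) (j, b) = if a + b = ρ i j then 1 else 0)
    (hα : IsOfFinAddOrder (ρ 0 0 - ρ 1 0 + ρ 1 1 - ρ 0 1)) :
    (tanner M).girth = 4 * addOrderOf (ρ 0 0 - ρ 1 0 + ρ 1 1 - ρ 0 1) := by
  rw [tanner_eq_permGraph_nextVertex hM]
  exact permGraph.girth_eq_of_minimalPeriod_eq (by grind [hα.addOrderOf_pos])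
    (nextVertex.minimalPeriod_eq ρ)

/-- The girth of the Tanner graph of a `2 × 2` array of DPMs equals
`4 · addOrderOf α` where `α = ρ 0 0 + ρ 1 1 + ρ 0 1 + ρ 1 0`; in particular it is `4`
if `α = 0` and `8` otherwise. -/
theorem dpmArray2x2_girth (ℓ : ℕ)
    (ρ : Fin 2 → Fin 2 → V ℓ)
    (M : Matrix (Fin 2 × V ℓ) (Fin 2 × V ℓ) (ZMod 2))
    (hM : ∀ (i : Fin 2) (a : V ℓ) (j : Fin 2) (b : V ℓ),
      M (i, a) (j, b) = if a + b = ρ i j then 1 else 0) :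
    (tanner M).girth = ((4 * addOrderOf (ρ 0 0 + ρ 1 1 + ρ 0 1 + ρ 1 0) : ℕ) : ℕ∞) ∧
    (ρ 0 0 + ρ 1 1 + ρ 0 1 + ρ 1 0 = 0 → (tanner M).girth = 4) ∧
    (ρ 0 0 + ρ 1 1 + ρ 0 1 + ρ 1 0 ≠ 0 → (tanner M).girth = 8) := by
  have hα : ρ 0 0 - ρ 1 0 + ρ 1 1 - ρ 0 1 = ρ 0 0 + ρ 1 1 + ρ 0 1 + ρ 1 0 := by
    simp only [ZModModule.sub_eq_add]
    abel
  have hgirth := dpmArray2x2_girth_general ρ M hM (isOfFinAddOrder_of_finite _)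
  rw [hα] at hgirth
  refine ⟨congrArg _ hgirth, fun h ↦ ?_, fun h ↦ ?_⟩
  · rw [hgirth, h, addOrderOf_zero]
  · rw [hgirth, addOrderOf_eq_prime (by rw [two_nsmul, ZModModule.add_self]) h]
end
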